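/- arXiv:2401.04254 — 2 statements merged into one kernel-verified Lean document; each statement's English description precedes it below -/
import Mathlib

section
/- Let (R, 𝔪, k) be a non-regular complete local one-dimensional domain with k algebraically closed of characteristic 0, Ω_R its universally finite module of differentials, R̄ = k[[t]] its integral closure with valuation v. Then R is quasihomogeneous if and only if v(tr_R(Ω_R)) = v(𝔪). -/
open PowerSeries IsLocalRing

set_option synthInstance.maxHeartbeats 1000000
set_option maxHeartbeats 1000000

/-- The trace ideal of an `R`-module `M`: the ideal generated by all images of
`R`-linear maps `M → R`. -/
noncomputable def traceIdeal (R M : Type*) [CommRing R] [AddCommGroup M] [Module R M] :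
    Ideal R :=
  ⨆ f : M →ₗ[R] R, LinearMap.range f

/-!
Let `θ = t · d/dt`. Clearing denominators with a conductor element shows that every `k`-derivation
`D` of `R` is the restriction of `h · θ` for some Laurent series `h`. In characteristic zero `θ`
preserves the order of series without constant term, so `D` shifts the valuation of all elements
of `𝔪` by the constant `v(h)`.

If some value of `D` were a unit, then `v(h) = -δ` with `δ > 0`, and repeated application of `D`
would show that `δ` divides every element of the value semigroup of `R`. The semigroup contains
all large integers, so `δ = 1`, and `R` would contain an element of order one, that is,
`R = k⟦t⟧`. Hence `tr(Ω_R) ⊆ 𝔪`, and quasihomogeneity forces `tr(Ω_R) = 𝔪`.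

Conversely, if `v(tr(Ω_R)) = v(𝔪)`, some `D` attains the value `v(𝔪)`. Since no value of `D` has
smaller order, the shift `v(h)` is zero. Thus `h` is a unit of `k⟦t⟧`, and one solves `D f = y`
for `y ∈ 𝔪` by correcting leading coefficients until the error lies in the conductor, where
`h · θ` can be inverted coefficientwise.
-/

section PowerSeries

theorem X_pow_dvd_iff_le_order {R : Type*} [Semiring R] {f : R⟦X⟧} {n : ℕ} :
    X ^ n ∣ f ↔ (n : ℕ∞) ≤ f.order := by
  rw [order_eq_emultiplicity_X, pow_dvd_iff_le_emultiplicity]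

theorem eq_zero_of_forall_X_pow_dvd {R : Type*} [Semiring R] {f : R⟦X⟧}
    (h : ∀ n : ℕ, X ^ n ∣ f) : f = 0 := by
  ext n
  exact X_pow_dvd_iff.mp (h (n + 1)) n n.lt_succ_self

theorem X_pow_dvd_sub_trunc {R : Type*} [CommRing R] (n : ℕ) (f : R⟦X⟧) :
    X ^ n ∣ f - (trunc n f : R⟦X⟧) :=
  ⟨_, sub_eq_of_eq_add (eq_X_pow_mul_shift_add_trunc n f)⟩

theorem derivation_eq_zero_of_apply_X {R : Type*} [CommRing R] {D : Derivation R R⟦X⟧ R⟦X⟧}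
    (hX : D X = 0) : D = 0 := by
  have X_pow_dvd_apply (n : ℕ) : ∀ f, X ^ n ∣ D f := by
    induction n with
    | zero => simp
    | succ n ih =>
      intro f
      rw [eq_X_mul_shift_add_const f, map_add, D.leibniz, hX, smul_zero, add_zero,
        ← algebraMap_eq, D.map_algebraMap, add_zero, smul_eq_mul, pow_succ']
      exact mul_dvd_mul_left X (ih _)
  ext1 f
  exact eq_zero_of_forall_X_pow_dvd fun n => X_pow_dvd_apply n f

theorem derivation_eq_smul_derivative {R : Type*} [CommRing R]
    (D : Derivation R R⟦X⟧ R⟦X⟧) : D = D X • derivative R :=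
  sub_eq_zero.mp (derivation_eq_zero_of_apply_X (by simp))

/-- The Euler derivation `X · d/dX` of `R⟦X⟧`. It multiplies the `n`-th coefficient by `n`. -/
noncomputable def eulerDerivation (R : Type*) [CommSemiring R] : Derivation R R⟦X⟧ R⟦X⟧ :=
  (X : R⟦X⟧) • derivative R

theorem eulerDerivation_apply {R : Type*} [CommSemiring R] (f : R⟦X⟧) :
    eulerDerivation R f = X * derivative R f :=
  rfl

theorem coeff_eulerDerivation {R : Type*} [CommSemiring R] (f : R⟦X⟧) (n : ℕ) :
    coeff n (eulerDerivation R f) = n * coeff n f := by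
  cases n with
  | zero => simp [eulerDerivation_apply]
  | succ n => rw [eulerDerivation_apply, coeff_succ_X_mul, coeff_derivative, mul_comm,
      Nat.cast_succ]

theorem order_eulerDerivation {R : Type*} [CommSemiring R] [NoZeroDivisors R] [CharZero R]
    {f : R⟦X⟧} (hf : constantCoeff f = 0) : (eulerDerivation R f).order = f.order := by
  have coeff_eq_zero_iff (n : ℕ) : coeff n (eulerDerivation R f) = 0 ↔ coeff n f = 0 := by
    rcases eq_or_ne n 0 with rfl | hn
    · simpa [coeff_eulerDerivation] using hf
    · simp [coeff_eulerDerivation, hn]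
  refine le_antisymm (le_order _ _ fun n hn => ?_) (le_order _ _ fun n hn => ?_)
  · exact (coeff_eq_zero_iff n).mp (coeff_of_lt_order n hn)
  · exact (coeff_eq_zero_iff n).mpr (coeff_of_lt_order n hn)

theorem exists_eulerDerivation_eq {k : Type*} [Field k] [CharZero k] {g : k⟦X⟧} {n : ℕ}
    (hn : n ≠ 0) (hg : X ^ n ∣ g) : ∃ f, X ^ n ∣ f ∧ eulerDerivation k f = g := by
  rw [X_pow_dvd_iff] at hg
  refine ⟨mk fun i => (i : k)⁻¹ * coeff i g, X_pow_dvd_iff.mpr fun i hi => ?_, ?_⟩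
  · rw [coeff_mk, hg i hi, mul_zero]
  · ext i
    rw [coeff_eulerDerivation, coeff_mk]
    rcases eq_or_ne i 0 with rfl | hi
    · rw [hg 0 (Nat.pos_of_ne_zero hn), mul_zero, mul_zero]
    · rw [mul_inv_cancel_left₀ (Nat.cast_ne_zero.mpr hi)]

theorem exists_X_pow_succ_dvd_sub_smul {k : Type*} [Field k] [CharZero k] {u f : k⟦X⟧} {n : ℕ}
    (hn : n ≠ 0) (hu : constantCoeff u ≠ 0) (hf : X ^ n ∣ f) :
    ∃ a : k, X ^ (n + 1) ∣ f - a • (u * eulerDerivation k f) := by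
  obtain ⟨g, rfl⟩ := hf
  have euler_X_pow_mul :
      eulerDerivation k (X ^ n * g) = X ^ n * ((n : k) • g + eulerDerivation k g) := by
    ext i
    simp only [coeff_eulerDerivation, coeff_X_pow_mul', map_add, map_smul, smul_eq_mul]
    split_ifs with hi
    · rw [Nat.cast_sub hi]
      ring
    · rw [mul_zero]
  -- `u θ` acts on `X ^ n k⟦X⟧ / X ^ (n + 1) k⟦X⟧` as multiplication by `n · u(0)`.
  let a : k := (n * constantCoeff u)⁻¹
  have X_dvd : X ∣ g - a • (u * ((n : k) • g + eulerDerivation k g)) := by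
    have hn' : (n : k) ≠ 0 := Nat.cast_ne_zero.mpr hn
    rw [X_dvd_iff]
    simp only [a, eulerDerivation_apply, smul_eq_C_mul, map_sub, map_mul, map_add,
      constantCoeff_C, constantCoeff_X, zero_mul, add_zero]
    field_simp
    ring
  refine ⟨a, ?_⟩
  rw [euler_X_pow_mul, mul_left_comm, ← mul_smul_comm, ← mul_sub, pow_succ]
  exact mul_dvd_mul_left _ X_dvd

end PowerSeries

theorem dvd_of_forall_exists_eq_add {Γ : Set ℕ} {δ : ℕ} (hδ : δ ≠ 0)
    (h : ∀ n ∈ Γ, n ≠ 0 → ∃ m ∈ Γ, n = m + δ) {n : ℕ} (hn : n ∈ Γ) : δ ∣ n := by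
  induction n using Nat.strong_induction_on with
  | h n ih =>
    rcases eq_or_ne n 0 with rfl | hn0
    · exact dvd_zero δ
    · obtain ⟨m, hm, rfl⟩ := h n hn hn0
      exact dvd_add (ih m (by lia) hm) dvd_rfl

section Derivation

variable {R A : Type*} [CommRing R] [CommRing A] [Algebra R A]

theorem range_le_iff_forall_apply_D_mem {M : Type*} [AddCommGroup M] [Module A M]
    {φ : Ω[A⁄R] →ₗ[A] M} {N : Submodule A M} :
    LinearMap.range φ ≤ N ↔ ∀ a, φ (KaehlerDifferential.D R A a) ∈ N := by
  rw [LinearMap.range_eq_map, ← KaehlerDifferential.span_range_derivation, Submodule.map_span,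
    Submodule.span_le, ← Set.range_comp, Set.range_subset_iff]
  rfl

theorem traceIdeal_kaehlerDifferential_le_iff {J : Ideal A} :
    traceIdeal A Ω[A⁄R] ≤ J ↔ ∀ (D : Derivation R A A) (a : A), D a ∈ J := by
  simp only [traceIdeal, iSup_le_iff, range_le_iff_forall_apply_D_mem]
  refine ⟨fun h D a => ?_, fun h φ => h (φ.compDer (KaehlerDifferential.D R A))⟩
  simpa only [D.liftKaehlerDifferential_comp_D] using h D.liftKaehlerDifferential a

theorem exists_range_eq_of_range_derivation_eq {J : Ideal A} {D : Derivation R A A}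
    (hD : Set.range D = J) : ∃ φ : Ω[A⁄R] →ₗ[A] A, LinearMap.range φ = J := by
  refine ⟨D.liftKaehlerDifferential, le_antisymm ?_ fun y hy => ?_⟩
  · refine range_le_iff_forall_apply_D_mem.mpr fun a => ?_
    rw [D.liftKaehlerDifferential_comp_D]
    exact hD.le ⟨a, rfl⟩
  · obtain ⟨a, rfl⟩ := hD.ge hy
    exact ⟨KaehlerDifferential.D R A a, D.liftKaehlerDifferential_comp_D a⟩

end Derivation

theorem exists_derivation_apply_eq_sq_smul {R B M : Type*} [CommRing R] [CommRing B] [Algebra R B]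
    [AddCommGroup M] [Module R M] [Module B M] [IsScalarTower R B M] {S : Subalgebra R B} {a : B}
    (ha : ∀ b, a * b ∈ S) (D : Derivation R S M) :
    ∃ D' : Derivation R B M, ∀ s : S, D' s = a ^ 2 • D s := by
  let toS : B →ₗ[R] S := (LinearMap.mulLeft R a).codRestrict S.toSubmodule ha
  let α : S := ⟨a, by simpa using ha 1⟩
  let D' : B →ₗ[R] M := a • (D : S →ₗ[R] M) ∘ₗ toS - (LinearMap.mulLeft R a).smulRight (D α)
  have D'_apply (b : B) : D' b = a • D (toS b) - (a * b) • D α := rfl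
  refine ⟨Derivation.mk' D' fun b b' => ?_, fun s => ?_⟩
  · have product_eq : α * toS (b * b') = toS b * toS b' :=
      Subtype.ext (show a * (a * (b * b')) = a * b * (a * b') by ring)
    have leibniz_eq : a • D (toS (b * b')) + (a * (b * b')) • D α =
        (a * b) • D (toS b') + (a * b') • D (toS b) := by
      simpa only [D.leibniz] using! congrArg D product_eq
    simp only [D'_apply]
    linear_combination (norm := module) leibniz_eq
  · have leibniz_eq : D (toS s) = a • D s + (s : B) • D α := D.leibniz α s
    rw [Derivation.coe_mk', D'_apply, leibniz_eq]
    module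

section CommRing

variable {k : Type*} [CommRing k] {S : Subalgebra k k⟦X⟧}

/-- `X ^ n k⟦X⟧ ⊆ S`, that is, the conductor of `S` in `k⟦X⟧` contains `X ^ n`. The exponent `n`
is not required to be the least one. -/
def IsConductorExponent (S : Subalgebra k k⟦X⟧) (n : ℕ) : Prop :=
  ∀ f : k⟦X⟧, X ^ n * f ∈ S

/-- `D` is the restriction to `S` of the derivation `(H / X ^ K) · θ` of the Laurent series, where
`θ` is the Euler derivation. The denominator is cleared so that the identity lives in `k⟦X⟧`. -/
def IsEulerMultiple (D : Derivation k S S) (H : k⟦X⟧) (K : ℕ) : Prop :=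
  ∀ f : S, X ^ K * (D f : k⟦X⟧) = H * eulerDerivation k f

theorem X_pow_mul_coe_mem {c : ℕ}
    (hc : ∀ i, c ≤ i → X ^ i ∈ S) (p : Polynomial k) : X ^ c * (p : k⟦X⟧) ∈ S := by
  induction p using Polynomial.induction_on' with
  | add p q hp hq =>
    rw [Polynomial.coe_add, mul_add]
    exact S.add_mem hp hq
  | monomial n a =>
    rw [Polynomial.coe_monomial, monomial_eq_C_mul_X_pow, mul_left_comm, ← pow_add,
      ← smul_eq_C_mul]
    exact S.smul_mem (hc _ (Nat.le_add_right c n)) a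

theorem IsConductorExponent.exists_isEulerMultiple {n : ℕ} (hS : IsConductorExponent S n)
    (D : Derivation k S S) : ∃ (H : k⟦X⟧) (K : ℕ), IsEulerMultiple D H K := by
  obtain ⟨D', hD'⟩ := exists_derivation_apply_eq_sq_smul hS ((Algebra.linearMap S k⟦X⟧).compDer D)
  refine ⟨D' X, n * 2 + 1, fun f => ?_⟩
  have h : X ^ (n * 2) * (D f : k⟦X⟧) = D' X * derivative k f := by
    rw [pow_mul, ← smul_eq_mul, ← smul_eq_mul, ← Derivation.smul_apply,
      ← derivation_eq_smul_derivative]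
    exact (hD' f).symm
  rw [eulerDerivation_apply]
  linear_combination X * h

theorem IsEulerMultiple.exists_apply_eq_mul {D : Derivation k S S} {H : k⟦X⟧} {K : ℕ}
    (hD : IsEulerMultiple D H K) (hH : H.order = K) :
    ∃ u : k⟦X⟧, constantCoeff u ≠ 0 ∧ ∀ f : S, (D f : k⟦X⟧) = u * eulerDerivation k f := by
  obtain ⟨u, rfl⟩ := X_pow_dvd_iff_le_order.mpr hH.ge
  refine ⟨u, ?_, fun f => X_pow_mul_cancel ((hD f).trans (mul_assoc _ _ _))⟩
  simpa [coeff_X_pow_mul'] using (order_eq_nat.mp hH).1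

theorem isLeast_order_iff {I : Ideal S} {n : ℕ} :
    IsLeast {m : ℕ | ∃ x : S, x ∈ I ∧ (x : k⟦X⟧) ≠ 0 ∧ (x : k⟦X⟧).order = (m : ℕ∞)} n ↔
      (∃ x ∈ I, (x : k⟦X⟧).order = n) ∧ ∀ x ∈ I, (n : ℕ∞) ≤ (x : k⟦X⟧).order := by
  have ne_zero_of_order_eq {f : k⟦X⟧} {m : ℕ} (hf : f.order = m) : f ≠ 0 := by
    rintro rfl
    exact ENat.natCast_ne_top m (hf.symm.trans order_zero)
  refine and_congr ⟨?_, ?_⟩ ⟨fun h x hx => ?_, ?_⟩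
  · rintro ⟨x, hx, -, hxn⟩
    exact ⟨x, hx, hxn⟩
  · rintro ⟨x, hx, hxn⟩
    exact ⟨x, hx, ne_zero_of_order_eq hxn, hxn⟩
  · by_cases hx₀ : (x : k⟦X⟧) = 0
    · rw [hx₀, order_zero]
      exact le_top
    · rw [← coe_toNat_order hx₀, Nat.cast_le]
      exact h ⟨x, hx, hx₀, (coe_toNat_order hx₀).symm⟩
  · rintro h m ⟨x, hx, -, hxm⟩
    exact_mod_cast (h x hx).trans_eq hxm

theorem exists_order_apply_le_of_mem_traceIdeal {x : S} (hx : x ∈ traceIdeal S Ω[S⁄k]) {n : ℕ}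
    (hn : (x : k⟦X⟧).order = n) :
    ∃ (D : Derivation k S S) (f : S), (D f : k⟦X⟧).order ≤ n := by
  by_contra! h
  let J : Ideal S := (Ideal.span {X ^ (n + 1)}).comap S.val
  have mem_J {f : S} : f ∈ J ↔ ((n + 1 : ℕ) : ℕ∞) ≤ (f : k⟦X⟧).order := by
    rw [← X_pow_dvd_iff_le_order, ← Ideal.mem_span_singleton]
    rfl
  have traceIdeal_le : traceIdeal S Ω[S⁄k] ≤ J :=
    traceIdeal_kaehlerDifferential_le_iff.mpr fun D f => mem_J.mpr (Order.add_one_le_of_lt (h D f))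
  have := mem_J.mp (traceIdeal_le hx)
  rw [hn, Nat.cast_le] at this
  exact n.lt_irrefl this

end CommRing

section Field

variable {k : Type*} [Field k] {S : Subalgebra k k⟦X⟧}

theorem mem_maximalIdeal_iff_constantCoeff_eq_zero [IsLocalRing S] {f : S} :
    f ∈ maximalIdeal S ↔ constantCoeff (f : k⟦X⟧) = 0 := by
  let ε : S →+* k := constantCoeff.comp S.val.toRingHom
  have hε : Function.Surjective ε := fun a => ⟨algebraMap k S a, by simp [ε]⟩
  rw [← eq_maximalIdeal (RingHom.ker_isMaximal_of_surjective ε hε), RingHom.mem_ker]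
  rfl

theorem mem_maximalIdeal_iff_order_ne_zero [IsLocalRing S] {f : S} :
    f ∈ maximalIdeal S ↔ (f : k⟦X⟧).order ≠ 0 :=
  mem_maximalIdeal_iff_constantCoeff_eq_zero.trans order_ne_zero_iff_constCoeff_eq_zero.symm

theorem X_pow_dvd_of_mem_maximalIdeal_pow [IsLocalRing S] {f : S} {n : ℕ}
    (hf : f ∈ maximalIdeal S ^ n) : X ^ n ∣ (f : k⟦X⟧) := by
  have h : maximalIdeal S ≤ (Ideal.span {(X : k⟦X⟧)}).comap S.val := fun g hg => by
    rw [Ideal.mem_comap, Ideal.mem_span_singleton]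
    exact X_dvd_iff.mpr (mem_maximalIdeal_iff_constantCoeff_eq_zero.mp hg)
  have hf' := Ideal.le_comap_pow _ n (Ideal.pow_right_mono h n hf)
  rwa [Ideal.mem_comap, Ideal.span_singleton_pow, Ideal.mem_span_singleton] at hf'

theorem mem_maximalIdeal_pow_of_coe_eq [IsLocalRing S] {c : ℕ} (hc₀ : c ≠ 0)
    (hc : ∀ i, c ≤ i → X ^ i ∈ S) {m : ℕ} {p : Polynomial k} (hp : Polynomial.X ^ (c * m) ∣ p)
    {f : S} (hf : (f : k⟦X⟧) = X ^ c * (p : k⟦X⟧)) : f ∈ maximalIdeal S ^ m := by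
  obtain ⟨q, rfl⟩ := hp
  let x : S := ⟨X ^ c, hc c le_rfl⟩
  have hx : x ∈ maximalIdeal S :=
    mem_maximalIdeal_iff_constantCoeff_eq_zero.mpr (by simp [x, hc₀])
  have factorization : f = x ^ m * ⟨X ^ c * (q : k⟦X⟧), X_pow_mul_coe_mem hc q⟩ := by
    refine Subtype.ext (hf.trans ?_)
    rw [Polynomial.coe_mul, Polynomial.coe_pow, Polynomial.coe_X, pow_mul]
    exact mul_left_comm _ _ _
  rw [factorization]
  exact Ideal.mul_mem_right _ _ (Ideal.pow_mem_pow hx m)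

theorem isConductorExponent_of_isPrecomplete [IsLocalRing S] [IsPrecomplete (maximalIdeal S) S]
    {c : ℕ} (hc₀ : c ≠ 0) (hc : ∀ i, c ≤ i → X ^ i ∈ S) : IsConductorExponent S c := by
  intro f
  let s (n : ℕ) : S := ⟨X ^ c * ((trunc (c * n) f : Polynomial k) : k⟦X⟧), X_pow_mul_coe_mem hc _⟩
  have s_cauchy {m n : ℕ} (hmn : m ≤ n) : s m - s n ∈ maximalIdeal S ^ m := by
    refine mem_maximalIdeal_pow_of_coe_eq hc₀ hc (p := trunc (c * m) f - trunc (c * n) f) ?_ ?_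
    · refine Polynomial.X_pow_dvd_iff.mpr fun d hd => ?_
      have hd' : d < c * n := hd.trans_le (Nat.mul_le_mul_left c hmn)
      rw [Polynomial.coeff_sub, coeff_trunc, coeff_trunc, if_pos hd, if_pos hd', sub_self]
    · rw [Polynomial.coe_sub, mul_sub]
      rfl
  obtain ⟨L, hL⟩ := IsPrecomplete.prec' (I := maximalIdeal S) s fun hmn => by
    simpa only [SModEq.sub_mem, smul_eq_mul, Ideal.mul_top] using s_cauchy hmn
  have limit_eq : X ^ c * f - (L : k⟦X⟧) = 0 := eq_zero_of_forall_X_pow_dvd fun n => by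
    have s_sub_L : X ^ n ∣ ((s n - L : S) : k⟦X⟧) := X_pow_dvd_of_mem_maximalIdeal_pow <| by
      simpa only [SModEq.sub_mem, smul_eq_mul, Ideal.mul_top] using hL n
    have f_sub_trunc : X ^ n ∣ f - (trunc (c * n) f : k⟦X⟧) :=
      (pow_dvd_pow X (Nat.le_mul_of_pos_left n (Nat.pos_of_ne_zero hc₀))).trans
        (X_pow_dvd_sub_trunc _ f)
    convert dvd_add (f_sub_trunc.mul_left (X ^ c)) s_sub_L using 1
    simp only [s, AddSubgroupClass.coe_sub]
    ring
  rw [sub_eq_zero.mp limit_eq]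
  exact L.2

theorem IsConductorExponent.of_succ {n : ℕ} (hS : IsConductorExponent S (n + 1)) {x : k⟦X⟧}
    (hx : x ∈ S) (hord : x.order = n) : IsConductorExponent S n := by
  obtain ⟨u, rfl⟩ := X_pow_dvd_iff_le_order.mpr hord.ge
  have hu : constantCoeff u ≠ 0 := by
    simpa [coeff_X_pow_mul'] using (order_eq_nat.mp hord).1
  intro f
  obtain ⟨g, hg⟩ : X ∣ f - C (constantCoeff f / constantCoeff u) * u :=
    X_dvd_iff.mpr (by simp [hu])
  have decomposition : X ^ n * f =
      X ^ (n + 1) * g + (constantCoeff f / constantCoeff u) • (X ^ n * u) := by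
    rw [smul_eq_C_mul]
    linear_combination X ^ n * hg
  rw [decomposition]
  exact S.add_mem (hS g) (S.smul_mem hx _)

theorem IsConductorExponent.eq_top {n : ℕ} (hS : IsConductorExponent S n) {x : k⟦X⟧}
    (hx : x ∈ S) (hord : x.order = 1) : S = ⊤ := by
  induction n with
  | zero => exact Algebra.eq_top_iff.mpr fun f => by simpa using hS f
  | succ n ih => exact ih (hS.of_succ (S.pow_mem hx n) (by simp [order_pow, hord]))

theorem exists_mem_maximalIdeal_apply_eq [IsLocalRing S] {M : Type*} [AddCommGroup M] [Module k M]
    [Module S M] (D : Derivation k S M) (f : S) : ∃ g ∈ maximalIdeal S, D g = D f := by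
  refine ⟨f - algebraMap k S (constantCoeff (f : k⟦X⟧)), ?_, by simp⟩
  rw [mem_maximalIdeal_iff_constantCoeff_eq_zero]
  exact (map_sub _ _ _).trans (sub_eq_zero.mpr (constantCoeff_C _).symm)

theorem isPrincipal_maximalIdeal_of_order_eq_one [IsLocalRing S] {n : ℕ}
    (hS : IsConductorExponent S n) {x : S} (hx : (x : k⟦X⟧).order = 1) :
    (maximalIdeal S).IsPrincipal := by
  obtain rfl := hS.eq_top x.2 hx
  have : IsPrincipalIdealRing (⊤ : Subalgebra k k⟦X⟧) :=
    .of_surjective _ (Subalgebra.topEquiv (R := k) (A := k⟦X⟧)).symm.surjective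
  exact IsPrincipalIdealRing.principal _

theorem IsEulerMultiple.order_apply_add [CharZero k] [IsLocalRing S] {D : Derivation k S S}
    {H : k⟦X⟧} {K : ℕ} (hD : IsEulerMultiple D H K) {f : S} (hf : f ∈ maximalIdeal S) :
    (D f : k⟦X⟧).order + K = (f : k⟦X⟧).order + H.order := by
  rw [mem_maximalIdeal_iff_constantCoeff_eq_zero] at hf
  have h := congrArg order (hD f)
  rwa [order_mul, order_mul, order_X_pow, order_eulerDerivation hf, add_comm, add_comm H.order] at h

theorem IsEulerMultiple.order_apply_add_order [CharZero k] [IsLocalRing S] {D : Derivation k S S}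
    {H : k⟦X⟧} {K : ℕ} (hD : IsEulerMultiple D H K) {f : S} (hf : f ∈ maximalIdeal S)
    (hDf : (D f : k⟦X⟧).order = 0) {y : S} (hy : y ∈ maximalIdeal S) :
    (D y : k⟦X⟧).order + (f : k⟦X⟧).order = (y : k⟦X⟧).order := by
  have K_eq : (K : ℕ∞) = (f : k⟦X⟧).order + H.order := by
    simpa only [hDf, zero_add] using hD.order_apply_add hf
  have hH : H.order ≠ ⊤ := ne_top_of_le_ne_top (ENat.natCast_ne_top K) (K_eq ▸ le_add_self)
  refine ENat.add_left_injective_of_ne_top hH ?_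
  simpa only [K_eq, ← add_assoc] using hD.order_apply_add hy

theorem IsEulerMultiple.dvd_order_of_order_apply_eq_zero [CharZero k] [IsLocalRing S]
    {D : Derivation k S S} {H : k⟦X⟧} {K : ℕ} (hD : IsEulerMultiple D H K) {f : S}
    (hf : f ∈ maximalIdeal S) (hDf : (D f : k⟦X⟧).order = 0) {δ : ℕ}
    (hδ : (f : k⟦X⟧).order = δ) {y : S} {n : ℕ} (hy : (y : k⟦X⟧).order = n) : δ ∣ n := by
  have hδ₀ : δ ≠ 0 := by
    rintro rfl
    exact mem_maximalIdeal_iff_order_ne_zero.mp hf hδ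
  refine dvd_of_forall_exists_eq_add (Γ := {n | ∃ y : S, (y : k⟦X⟧).order = n}) hδ₀ ?_ ⟨y, hy⟩
  rintro n ⟨y, hy⟩ hn
  have hy_mem : y ∈ maximalIdeal S := by
    rw [mem_maximalIdeal_iff_order_ne_zero, hy]
    exact_mod_cast hn
  have order_Dy : (D y : k⟦X⟧).order + δ = n := by
    rw [← hδ, ← hy, hD.order_apply_add_order hf hDf hy_mem]
  obtain ⟨m, hm⟩ := ENat.ne_top_iff_exists.mp
    (ne_top_of_le_ne_top (ENat.natCast_ne_top n) (order_Dy ▸ le_self_add))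
  refine ⟨m, ⟨D y, hm.symm⟩, ?_⟩
  rw [← hm] at order_Dy
  exact_mod_cast order_Dy.symm

theorem IsConductorExponent.apply_mem_maximalIdeal [CharZero k] [IsLocalRing S] {n : ℕ}
    (hS : IsConductorExponent S n) (hreg : ¬ (maximalIdeal S).IsPrincipal)
    (D : Derivation k S S) (f : S) : D f ∈ maximalIdeal S := by
  by_contra hDf
  obtain ⟨g, hg, hDg⟩ := exists_mem_maximalIdeal_apply_eq D f
  obtain ⟨H, K, hD⟩ := hS.exists_isEulerMultiple D
  have hDg₀ : (D g : k⟦X⟧).order = 0 := by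
    rwa [hDg, ← not_ne_iff, ← mem_maximalIdeal_iff_order_ne_zero]
  obtain ⟨δ, hδ⟩ : ∃ δ : ℕ, (g : k⟦X⟧).order = δ := by
    have hg₀ : (g : k⟦X⟧) ≠ 0 := by
      intro h
      simp [Subtype.ext (a2 := (0 : S)) h] at hDg₀
    exact ⟨_, (coe_toNat_order hg₀).symm⟩
  have δ_dvd (i : ℕ) : δ ∣ n + i :=
    hD.dvd_order_of_order_apply_eq_zero hg hDg₀ hδ (y := ⟨X ^ n * X ^ i, hS _⟩)
      (by simp only [order_mul, order_X_pow, Nat.cast_add])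
  have δ_eq_one : δ = 1 := Nat.dvd_one.mp ((Nat.dvd_add_right (δ_dvd 0)).mp (δ_dvd 1))
  exact hreg (isPrincipal_maximalIdeal_of_order_eq_one hS (by rw [hδ, δ_eq_one, Nat.cast_one]))

theorem IsEulerMultiple.order_eq_of_order_apply_le [CharZero k] [IsLocalRing S]
    {D : Derivation k S S} {H : k⟦X⟧} {K : ℕ} (hD : IsEulerMultiple D H K)
    (hDm : ∀ f, D f ∈ maximalIdeal S) {μ : ℕ}
    (hμ : ∀ f ∈ maximalIdeal S, (μ : ℕ∞) ≤ (f : k⟦X⟧).order)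
    (hμ' : ∃ g ∈ maximalIdeal S, (g : k⟦X⟧).order = μ) {f : S}
    (hf : (D f : k⟦X⟧).order ≤ μ) : H.order = K := by
  obtain ⟨f₀, hf₀, hDf₀⟩ := exists_mem_maximalIdeal_apply_eq D f
  obtain ⟨g, hg, hg_order⟩ := hμ'
  have hμ_top : (μ : ℕ∞) ≠ ⊤ := ENat.natCast_ne_top μ
  refine le_antisymm ((ENat.add_le_add_iff_left hμ_top).mp ?_)
    ((ENat.add_le_add_iff_left hμ_top).mp ?_)
  · calc (μ : ℕ∞) + H.order ≤ (f₀ : k⟦X⟧).order + H.order := by gcongr; exact hμ f₀ hf₀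
      _ = (D f : k⟦X⟧).order + K := by rw [← hD.order_apply_add hf₀, hDf₀]
      _ ≤ μ + K := by gcongr
  · calc (μ : ℕ∞) + K ≤ (D g : k⟦X⟧).order + K := by gcongr; exact hμ _ (hDm g)
      _ = μ + H.order := by rw [hD.order_apply_add hg, hg_order]

theorem exists_X_pow_dvd_sub_apply [CharZero k] [IsLocalRing S] {D : Derivation k S S} {u : k⟦X⟧}
    (hu : constantCoeff u ≠ 0) (hD : ∀ f : S, (D f : k⟦X⟧) = u * eulerDerivation k f) {y : S}
    (hy : y ∈ maximalIdeal S) (n : ℕ) : ∃ f, X ^ (n + 1) ∣ ((y - D f : S) : k⟦X⟧) := by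
  induction n with
  | zero =>
    refine ⟨0, ?_⟩
    rw [map_zero, sub_zero, zero_add, pow_one, X_dvd_iff]
    exact mem_maximalIdeal_iff_constantCoeff_eq_zero.mp hy
  | succ n ih =>
    obtain ⟨f, hf⟩ := ih
    obtain ⟨a, ha⟩ := exists_X_pow_succ_dvd_sub_smul n.succ_ne_zero hu hf
    refine ⟨f + a • (y - D f), ?_⟩
    rw [← hD] at ha
    rwa [map_add, D.map_smul, ← sub_sub]

theorem IsConductorExponent.exists_apply_eq [CharZero k] [IsLocalRing S] {n : ℕ}
    (hS : IsConductorExponent S n) {D : Derivation k S S} {u : k⟦X⟧} (hu : constantCoeff u ≠ 0)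
    (hD : ∀ f : S, (D f : k⟦X⟧) = u * eulerDerivation k f) {y : S} (hy : y ∈ maximalIdeal S) :
    ∃ f, D f = y := by
  obtain ⟨f, hf⟩ := exists_X_pow_dvd_sub_apply hu hD hy n
  obtain ⟨g, ⟨q, rfl⟩, hg⟩ := exists_eulerDerivation_eq n.succ_ne_zero (hf.mul_left u⁻¹)
  have g_mem : X ^ (n + 1) * q ∈ S := by
    rw [pow_succ, mul_assoc]
    exact hS _
  have apply_g : D ⟨X ^ (n + 1) * q, g_mem⟩ = y - D f := by
    refine Subtype.ext ?_
    rw [hD, hg, ← mul_assoc, PowerSeries.mul_inv_cancel u hu, one_mul]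
  exact ⟨f + ⟨X ^ (n + 1) * q, g_mem⟩, by rw [map_add, apply_g, add_sub_cancel]⟩

end Field

theorem stmt11_general (k : Type*) [Field k] [CharZero k]
    (S : Subalgebra k (PowerSeries k)) [IsLocalRing S] [IsAdicComplete (maximalIdeal S) S]
    (c : ℕ) (hc : ∀ i : ℕ, c ≤ i → (X : PowerSeries k) ^ i ∈ S)
    (hreg : ¬ (maximalIdeal S).IsPrincipal)
    (vtr vm : ℕ)
    (hvtr : IsLeast {m : ℕ | ∃ x : S, x ∈ traceIdeal S (Ω[S⁄k]) ∧
      (x : PowerSeries k) ≠ 0 ∧ (x : PowerSeries k).order = (m : ℕ∞)} vtr)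
    (hvm : IsLeast {m : ℕ | ∃ x : S, x ∈ maximalIdeal S ∧
      (x : PowerSeries k) ≠ 0 ∧ (x : PowerSeries k).order = (m : ℕ∞)} vm) :
    (∃ φ : (Ω[S⁄k]) →ₗ[S] S, LinearMap.range φ = (maximalIdeal S : Ideal S)) ↔
      vtr = vm := by
  have hS : IsConductorExponent S (c + 1) :=
    isConductorExponent_of_isPrecomplete c.succ_ne_zero fun i hi => hc i (by lia)
  have apply_mem := hS.apply_mem_maximalIdeal hreg
  refine ⟨fun ⟨φ, hφ⟩ => ?_, ?_⟩
  · have traceIdeal_eq : traceIdeal S Ω[S⁄k] = maximalIdeal S :=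
      le_antisymm (traceIdeal_kaehlerDifferential_le_iff.mpr apply_mem)
        (hφ ▸ le_iSup (fun ψ : Ω[S⁄k] →ₗ[S] S => LinearMap.range ψ) φ)
    exact hvtr.unique (traceIdeal_eq ▸ hvm)
  · rintro rfl
    obtain ⟨hμ', hμ⟩ := isLeast_order_iff.mp hvm
    obtain ⟨⟨x, hx, hx_order⟩, -⟩ := isLeast_order_iff.mp hvtr
    obtain ⟨D, f, hf⟩ := exists_order_apply_le_of_mem_traceIdeal hx hx_order
    obtain ⟨H, K, hD⟩ := hS.exists_isEulerMultiple D
    have hH : H.order = K := hD.order_eq_of_order_apply_le (apply_mem D) hμ hμ' hf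
    obtain ⟨u, hu, hDu⟩ := hD.exists_apply_eq_mul hH
    have range_D : Set.range D = maximalIdeal S :=
      Set.Subset.antisymm (Set.range_subset_iff.mpr (apply_mem D))
        fun y hy => hS.exists_apply_eq hu hDu hy
    exact exists_range_eq_of_range_derivation_eq range_D

/-- Let `(R, 𝔪, k)` be a non-regular complete local one-dimensional domain with `k`
algebraically closed of characteristic `0`, realized as a subalgebra `S ⊆ k⟦t⟧` with
integral closure `k⟦t⟧` (nonzero conductor), `Ω_S` its module of differentials and `v`
the `t`-adic valuation, extended to ideals by taking minimal valuations.  Then `R` is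
quasihomogeneous (`Ω_S` surjects onto `𝔪`) if and only if `v(tr_R(Ω_S)) = v(𝔪)`. -/
theorem stmt11 (k : Type*) [Field k] [IsAlgClosed k] [CharZero k]
    (S : Subalgebra k (PowerSeries k)) [IsLocalRing S] [IsNoetherianRing S]
    [IsAdicComplete (maximalIdeal S) S]
    (hdim : ringKrullDim S = 1)
    -- `k⟦t⟧` is the integral closure of `S` in its fraction field: the conductor is nonzero
    (c : ℕ) (hc : ∀ i : ℕ, c ≤ i → (X : PowerSeries k) ^ i ∈ S)
    -- `S` is non-regular, i.e. its maximal ideal is not principal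
    (hreg : ¬ (maximalIdeal S).IsPrincipal)
    (vtr vm : ℕ)
    -- `vtr = v(tr_S(Ω_S))`
    (hvtr : IsLeast {m : ℕ | ∃ x : S, x ∈ traceIdeal S (Ω[S⁄k]) ∧
      (x : PowerSeries k) ≠ 0 ∧ (x : PowerSeries k).order = (m : ℕ∞)} vtr)
    -- `vm = v(𝔪)`
    (hvm : IsLeast {m : ℕ | ∃ x : S, x ∈ maximalIdeal S ∧
      (x : PowerSeries k) ≠ 0 ∧ (x : PowerSeries k).order = (m : ℕ∞)} vm) :
    (∃ φ : (Ω[S⁄k]) →ₗ[S] S, LinearMap.range φ = (maximalIdeal S : Ideal S)) ↔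
      vtr = vm :=
  stmt11_general k S c hc hreg vtr vm hvtr hvm
end

section
/- Let (R, 𝔪, k) be a non-regular complete local one-dimensional domain over an algebraically closed field k of characteristic 0, and suppose there is a surjection Ω_R ↠ 𝔪 from the universally finite module of differentials onto the maximal ideal. Then v(tr_R(Ω_R)) = v(𝔪), where v is the valuation of the integral closure R̄ = k[[t]] extended to ideals by minimum valuation. -/
open PowerSeries IsLocalRing

set_option synthInstance.maxHeartbeats 1000000
set_option maxHeartbeats 1000000

/-!
Write `𝔪` for the maximal ideal of `S` and choose `n ≥ c` invertible in `k`. If a derivation `D` of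
`S` kills `X ^ n`, then it kills every `X ^ i` with `i ≥ n`, because `(X ^ i) ^ n = (X ^ n) ^ i`.
By completeness `S` contains the conductor `X ^ n k⟦X⟧`, whose elements are `𝔪`-adic limits of
linear combinations of these `X ^ i`, and derivations are `𝔪`-adically continuous, so `D` kills
`X ^ n * f` for every `f` in `S`; hence `D f = 0`. Thus `D ↦ D (X ^ n)` embeds
`Hom(Ω, S) = Der(S, S)` into `S`, which is the rank one property of `Ω`.

In rank one, any two nonzero maps `Ω → S` have the same kernel. If some `f` were surjective, say
`f w = 1`, the given `φ` would be `φ w • f`, and `𝔪 = range φ` would be principal. So every map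
`Ω → S` lands in `𝔪`, and `φ` has range `𝔪`: the trace ideal is exactly `𝔪`.
-/

section RankOne

variable {R M : Type*} [CommRing R] [AddCommGroup M] [Module R M]

theorem range_le_traceIdeal (f : M →ₗ[R] R) : LinearMap.range f ≤ traceIdeal R M :=
  le_iSup (fun f : M →ₗ[R] R ↦ LinearMap.range f) f

theorem traceIdeal_le_maximalIdeal [IsLocalRing R]
    (h : ∀ f : M →ₗ[R] R, ¬ Function.Surjective f) : traceIdeal R M ≤ maximalIdeal R :=
  iSup_le fun f ↦ le_maximalIdeal (mt LinearMap.range_eq_top.mp (h f))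

theorem isPrincipal_range_of_ker_le_ker {f g : M →ₗ[R] R} (hf : Function.Surjective f)
    (hfg : LinearMap.ker f ≤ LinearMap.ker g) : (LinearMap.range g).IsPrincipal := by
  obtain ⟨w, hw⟩ := hf 1
  have hg (x : M) : g x = f x • g w := by
    have hx : x - f x • w ∈ LinearMap.ker f := by simp [hw]
    simpa [sub_eq_zero] using hfg hx
  refine ⟨g w, le_antisymm ?_ ?_⟩
  · rintro _ ⟨x, rfl⟩
    exact Submodule.mem_span_singleton.mpr ⟨f x, (hg x).symm⟩
  · exact (Submodule.span_singleton_le_iff_mem _ _).mpr ⟨w, rfl⟩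

theorem ker_le_ker_of_injective_dual_eval [IsDomain R] {p : M}
    (hp : Function.Injective (Module.Dual.eval R M p)) {f : M →ₗ[R] R} (hf : f ≠ 0)
    (g : M →ₗ[R] R) : LinearMap.ker f ≤ LinearMap.ker g := by
  have hfp : f p ≠ 0 := fun h ↦ hf (hp (by simpa using h))
  have hfg : f p • g = g p • f := hp (by simp [mul_comm])
  intro x hx
  have hfgx : f p * g x = g p * f x := LinearMap.congr_fun hfg x
  rw [LinearMap.mem_ker] at hx ⊢
  rw [hx, mul_zero] at hfgx
  exact (mul_eq_zero.mp hfgx).resolve_left hfp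

theorem traceIdeal_eq_maximalIdeal [IsDomain R] [IsLocalRing R] {p : M}
    (hp : Function.Injective (Module.Dual.eval R M p))
    (hreg : ¬ (maximalIdeal R).IsPrincipal) {φ : M →ₗ[R] R}
    (hφ : LinearMap.range φ = maximalIdeal R) : traceIdeal R M = maximalIdeal R := by
  refine le_antisymm (traceIdeal_le_maximalIdeal fun f hf ↦ hreg ?_)
    (hφ ▸ range_le_traceIdeal φ)
  have hf0 : f ≠ 0 := by
    rintro rfl
    obtain ⟨_, h01⟩ := hf 1
    exact zero_ne_one h01
  exact hφ ▸ isPrincipal_range_of_ker_le_ker hf (ker_le_ker_of_injective_dual_eval hp hf0 φ)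

end RankOne

section Derivation

variable {R A M : Type*} [CommRing R] [CommRing A] [Algebra R A]
  [AddCommGroup M] [Module A M] [Module R M]

theorem derivation_apply_mem_pow_smul_top (D : Derivation R A M) (I : Ideal A) {n : ℕ} {a : A}
    (ha : a ∈ I ^ (n + 1)) : D a ∈ (I ^ n • ⊤ : Submodule A M) := by
  induction n generalizing a with
  | zero => simp
  | succ n ih =>
    rw [pow_succ] at ha
    refine Submodule.mul_induction_on ha (fun b hb c hc ↦ ?_) fun x y hx hy ↦ ?_
    · rw [D.leibniz]
      refine add_mem (Submodule.smul_mem_smul hb trivial) ?_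
      rw [pow_succ', ← smul_eq_mul, Submodule.smul_assoc]
      exact Submodule.smul_mem_smul hc (ih hb)
    · rw [map_add]
      exact add_mem hx hy

theorem derivation_apply_eq_zero_of_forall_exists_sub_mem_pow (D : Derivation R A M) (I : Ideal A)
    [IsHausdorff I M] {a : A} (h : ∀ n, ∃ b, D b = 0 ∧ a - b ∈ I ^ n) : D a = 0 := by
  refine IsHausdorff.haus (I := I) inferInstance _ fun n ↦ SModEq.zero.mpr ?_
  obtain ⟨b, hb, hab⟩ := h (n + 1)
  simpa [hb] using derivation_apply_mem_pow_smul_top D I hab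

theorem derivation_apply_eq_zero_of_pow [IsDomain A] [Module.IsTorsionFree A M]
    (D : Derivation R A M) {a : A} {n : ℕ} (hn : (n : A) ≠ 0) (h : D (a ^ n) = 0) : D a = 0 := by
  rcases eq_or_ne a 0 with rfl | ha
  · exact map_zero D
  · rw [D.leibniz_pow, ← Nat.cast_smul_eq_nsmul A, smul_smul] at h
    exact (smul_eq_zero.mp h).resolve_left (mul_ne_zero hn (pow_ne_zero _ ha))

theorem injective_dual_eval_kaehlerDifferential {a : A}
    (h : ∀ D : Derivation R A A, D a = 0 → D = 0) :
    Function.Injective (Module.Dual.eval A (Ω[A⁄R]) (KaehlerDifferential.D R A a)) :=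
  (injective_iff_map_eq_zero _).mpr fun _ hf ↦
    (KaehlerDifferential.linearMapEquivDerivation R A).map_eq_zero_iff.mp (h _ hf)

end Derivation

section PowerSeriesSubalgebra

theorem X_pow_mul_coe_mem_s19 {R : Type*} [CommSemiring R] (N : Submodule R R⟦X⟧) {n : ℕ}
    (hN : ∀ i, n ≤ i → (X : R⟦X⟧) ^ i ∈ N) (p : Polynomial R) : X ^ n * (p : R⟦X⟧) ∈ N := by
  induction p using Polynomial.induction_on' with
  | add p q hp hq =>
    rw [Polynomial.coe_add, mul_add]
    exact N.add_mem hp hq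
  | monomial i a =>
    have hmonomial : X ^ n * (Polynomial.monomial i a).toPowerSeries = a • X ^ (n + i) := by
      rw [Polynomial.coe_monomial, monomial_eq_C_mul_X_pow, smul_eq_C_mul]
      ring
    rw [hmonomial]
    exact N.smul_mem a (hN _ (Nat.le_add_right n i))

theorem X_pow_dvd_trunc_sub_trunc {R : Type*} [CommRing R] {m n : ℕ} (hmn : m ≤ n) (g : R⟦X⟧) :
    Polynomial.X ^ m ∣ trunc n g - trunc m g := by
  refine Polynomial.X_pow_dvd_iff.mpr fun d hd ↦ ?_
  rw [Polynomial.coeff_sub, coeff_trunc, coeff_trunc, if_pos hd, if_pos (hd.trans_le hmn),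
    sub_self]

theorem X_pow_mul_sub_X_pow_mul_trunc {R : Type*} [CommRing R] (n m : ℕ) (g : R⟦X⟧) :
    X ^ n * g - X ^ n * (trunc m g).toPowerSeries =
      X ^ m * (X ^ n * mk fun i ↦ coeff (i + m) g) := by
  linear_combination X ^ n * eq_X_pow_mul_shift_add_trunc m g

variable {k : Type*} [Field k] {S : Subalgebra k k⟦X⟧} [IsLocalRing S] {n : ℕ}

theorem mem_maximalIdeal_iff_X_dvd {x : S} : x ∈ maximalIdeal S ↔ X ∣ (x : k⟦X⟧) := by
  let ε : S →+* k := constantCoeff.comp S.val.toRingHom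
  have hε : Function.Surjective ε := fun a ↦ ⟨algebraMap k S a, by simp [ε]⟩
  rw [← ker_eq_maximalIdeal ε hε, RingHom.mem_ker, X_dvd_iff]
  rfl

theorem X_pow_dvd_of_mem_maximalIdeal_pow_s19 {m : ℕ} {x : S} (hx : x ∈ maximalIdeal S ^ m) :
    X ^ m ∣ (x : k⟦X⟧) := by
  have hle : maximalIdeal S ≤ (Ideal.span {(X : k⟦X⟧)}).comap S.val := fun y hy ↦
    Ideal.mem_span_singleton.mpr (mem_maximalIdeal_iff_X_dvd.mp hy)
  have hx' := Ideal.le_comap_pow S.val m (Ideal.pow_right_mono hle m hx)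
  rwa [Ideal.mem_comap, Ideal.span_singleton_pow, Ideal.mem_span_singleton] at hx'

theorem mem_maximalIdeal_pow_of_coe_eq_s19 (hn : n ≠ 0) (hX : (X : k⟦X⟧) ^ n ∈ S) {m : ℕ} {x : S}
    {g : k⟦X⟧} (hg : g ∈ S) (h : (x : k⟦X⟧) = X ^ (n * m) * g) : x ∈ maximalIdeal S ^ m := by
  have hxg : x = (⟨X ^ n, hX⟩ : S) ^ m * ⟨g, hg⟩ := Subtype.ext (by simpa [pow_mul] using h)
  have hu : (⟨X ^ n, hX⟩ : S) ∈ maximalIdeal S :=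
    mem_maximalIdeal_iff_X_dvd.mpr (dvd_pow_self X hn)
  exact hxg ▸ Ideal.mul_mem_right _ _ (Ideal.pow_mem_pow hu m)

theorem X_pow_mul_mem [IsPrecomplete (maximalIdeal S) S] (hn : n ≠ 0)
    (hS : ∀ i, n ≤ i → (X : k⟦X⟧) ^ i ∈ S) (g : k⟦X⟧) : X ^ n * g ∈ S := by
  have hpoly (p : Polynomial k) : X ^ n * (p : k⟦X⟧) ∈ S :=
    X_pow_mul_coe_mem_s19 S.toSubmodule hS p
  let F (m : ℕ) : S := ⟨X ^ n * (trunc (n * m) g).toPowerSeries, hpoly (trunc (n * m) g)⟩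
  have hF {l m : ℕ} (hlm : l ≤ m) :
      F l ≡ F m [SMOD (maximalIdeal S ^ l • ⊤ : Submodule S S)] := by
    obtain ⟨q, hq⟩ := X_pow_dvd_trunc_sub_trunc (Nat.mul_le_mul_left n hlm) g
    have hsub : ((F m - F l : S) : k⟦X⟧) = X ^ (n * l) * (X ^ n * (q : k⟦X⟧)) := by
      rw [AddSubgroupClass.coe_sub, ← mul_sub, ← Polynomial.coe_sub, hq, Polynomial.coe_mul,
        Polynomial.coe_pow, Polynomial.coe_X, mul_left_comm]
    rw [SModEq.comm, SModEq.sub_mem, smul_eq_mul, Ideal.mul_top]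
    exact mem_maximalIdeal_pow_of_coe_eq_s19 hn (hS n le_rfl) (hpoly q) hsub
  obtain ⟨L, hL⟩ := IsPrecomplete.prec (I := maximalIdeal S) inferInstance hF
  have hdvd (m : ℕ) : X ^ m ∣ X ^ n * g - (L : k⟦X⟧) := by
    have hFL : X ^ m ∣ ((F m - L : S) : k⟦X⟧) := by
      have hmem := SModEq.sub_mem.mp (hL m)
      rw [smul_eq_mul, Ideal.mul_top] at hmem
      exact X_pow_dvd_of_mem_maximalIdeal_pow_s19 hmem
    have hgF : X ^ m ∣ X ^ n * g - (F m : k⟦X⟧) := by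
      rw [X_pow_mul_sub_X_pow_mul_trunc]
      exact (pow_dvd_pow X (Nat.le_mul_of_pos_left m (Nat.pos_of_ne_zero hn))).mul_right _
    simpa using dvd_add hgF hFL
  have hgL : X ^ n * g = (L : k⟦X⟧) := by
    refine sub_eq_zero.mp (PowerSeries.ext fun j ↦ ?_)
    exact X_pow_dvd_iff.mp (hdvd (j + 1)) j j.lt_succ_self
  exact hgL ▸ L.2

theorem derivation_eq_zero_of_X_pow [IsPrecomplete (maximalIdeal S) S] {M : Type*}
    [AddCommGroup M] [Module k M] [Module S M] [IsHausdorff (maximalIdeal S) M]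
    [Module.IsTorsionFree S M] (hn : (n : k) ≠ 0) (hS : ∀ i, n ≤ i → (X : k⟦X⟧) ^ i ∈ S)
    {D : Derivation k S M} (hD : D ⟨X ^ n, hS n le_rfl⟩ = 0) : D = 0 := by
  have hn0 : n ≠ 0 := by
    rintro rfl
    exact hn Nat.cast_zero
  have hnS : (n : S) ≠ 0 := by
    rw [← map_natCast (algebraMap k S)]
    exact (map_ne_zero _).mpr hn
  let K : Submodule k k⟦X⟧ := (LinearMap.ker (D : S →ₗ[k] M)).map S.val.toLinearMap
  have hK (i : ℕ) (hi : n ≤ i) : (X : k⟦X⟧) ^ i ∈ K := by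
    have hpow : (⟨X ^ i, hS i hi⟩ : S) ^ n = ⟨X ^ n, hS n le_rfl⟩ ^ i :=
      Subtype.ext (pow_right_comm X i n)
    have hDi : D ⟨X ^ i, hS i hi⟩ = 0 :=
      derivation_apply_eq_zero_of_pow D hnS (by rw [hpow, D.leibniz_pow, hD, smul_zero, smul_zero])
    exact ⟨⟨X ^ i, hS i hi⟩, hDi, rfl⟩
  ext f
  have hDf : D (⟨X ^ n, hS n le_rfl⟩ * f) = 0 := by
    refine derivation_apply_eq_zero_of_forall_exists_sub_mem_pow D (maximalIdeal S) fun m ↦ ?_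
    obtain ⟨b, hb, hbf : (b : k⟦X⟧) = _⟩ :=
      X_pow_mul_coe_mem_s19 K hK (trunc (n * m) (f : k⟦X⟧))
    have hfb : ((⟨X ^ n, hS n le_rfl⟩ * f - b : S) : k⟦X⟧) =
        X ^ (n * m) * (X ^ n * mk fun i ↦ coeff (i + n * m) (f : k⟦X⟧)) := by
      rw [AddSubgroupClass.coe_sub, MulMemClass.coe_mul, hbf, X_pow_mul_sub_X_pow_mul_trunc]
    exact ⟨b, hb, mem_maximalIdeal_pow_of_coe_eq_s19 hn0 (hS n le_rfl) (X_pow_mul_mem hn0 hS _) hfb⟩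
  rw [D.leibniz, hD, smul_zero, add_zero] at hDf
  have hX : (⟨X ^ n, hS n le_rfl⟩ : S) ≠ 0 := fun h ↦
    pow_ne_zero n X_ne_zero (congrArg Subtype.val h)
  exact (smul_eq_zero.mp hDf).resolve_left hX

end PowerSeriesSubalgebra

theorem stmt19_general {k : Type*} [Field k] (S : Subalgebra k k⟦X⟧) [IsLocalRing S]
    [IsAdicComplete (maximalIdeal S) S] (c : ℕ) (hc : ∀ i, c ≤ i → (X : k⟦X⟧) ^ i ∈ S)
    (hreg : ¬ (maximalIdeal S).IsPrincipal)
    (hqh : ∃ φ : (Ω[S⁄k]) →ₗ[S] S, LinearMap.range φ = maximalIdeal S) :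
    traceIdeal S (Ω[S⁄k]) = maximalIdeal S := by
  obtain ⟨n, hcn, hn⟩ : ∃ n, c ≤ n ∧ (n : k) ≠ 0 := by
    by_contra! h
    have hsucc := h (c + 1) (by lia)
    rw [Nat.cast_succ, h c le_rfl, zero_add] at hsucc
    exact one_ne_zero hsucc
  obtain ⟨φ, hφ⟩ := hqh
  have hS (i : ℕ) (hi : n ≤ i) : (X : k⟦X⟧) ^ i ∈ S := hc i (hcn.trans hi)
  exact traceIdeal_eq_maximalIdeal
    (injective_dual_eval_kaehlerDifferential fun _ ↦ derivation_eq_zero_of_X_pow hn hS) hreg hφ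

/-- Let `(R, 𝔪, k)` be a non-regular complete local one-dimensional domain with `k`
algebraically closed of characteristic `0`, realized as a subalgebra `S ⊆ k⟦t⟧` with
integral closure `k⟦t⟧` (nonzero conductor), `Ω_S` its module of differentials and `v`
the `t`-adic valuation, extended to ideals by taking minimal valuations.  Then `R` is
such that `Ω_S` surjects onto `𝔪` (quasihomogeneous).  Then `v(tr_R(Ω_S)) = v(𝔪)`. -/
theorem stmt19 (k : Type*) [Field k] [IsAlgClosed k] [CharZero k]
    (S : Subalgebra k (PowerSeries k)) [IsLocalRing S] [IsNoetherianRing S]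
    [IsAdicComplete (maximalIdeal S) S]
    (hdim : ringKrullDim S = 1)
    -- `k⟦t⟧` is the integral closure of `S` in its fraction field: the conductor is nonzero
    (c : ℕ) (hc : ∀ i : ℕ, c ≤ i → (X : PowerSeries k) ^ i ∈ S)
    -- `S` is non-regular, i.e. its maximal ideal is not principal
    (hreg : ¬ (maximalIdeal S).IsPrincipal)
    (vtr vm : ℕ)
    -- `vtr = v(tr_S(Ω_S))`
    (hvtr : IsLeast {m : ℕ | ∃ x : S, x ∈ traceIdeal S (Ω[S⁄k]) ∧
      (x : PowerSeries k) ≠ 0 ∧ (x : PowerSeries k).order = (m : ℕ∞)} vtr)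
    -- `vm = v(𝔪)`
    (hvm : IsLeast {m : ℕ | ∃ x : S, x ∈ maximalIdeal S ∧
      (x : PowerSeries k) ≠ 0 ∧ (x : PowerSeries k).order = (m : ℕ∞)} vm)
    -- `S` is quasihomogeneous: there is a surjection `Ω_S ↠ 𝔪`
    (hqh : ∃ φ : (Ω[S⁄k]) →ₗ[S] S, LinearMap.range φ = (maximalIdeal S : Ideal S)) :
    vtr = vm := by
  exact hvtr.unique (stmt19_general S c hc hreg hqh ▸ hvm)
end
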